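/- Fix Bob's orthonormal bases {φ_x^a} and let Alice's bases be their entrywise complex conjugates, ψ_x^a := conj(φ_x^a). Let Z_Q be the set of values Σ_{x=1}^N Σ_{a=1}^d Tr((|ψ_x^a⟩⟨ψ_x^a| ⊗ |φ_x^a⟩⟨φ_x^a|) ρ) as ρ ranges over all density matrices on ℂ^{d·d}, and let Z_S be the set of values S_S := Σ_{x=1}^N Σ_{a=1}^d Σ_{λ∈Λ} p(λ) ⟨ψ_x^a, ρ_λ^A ψ_x^a⟩ ⟨φ_x^a, ρ_λ^B φ_x^a⟩ over all quantum separable models. Then sup Z_Q ≥ (N / S^{AB}) · sup Z_S, where S^{AB} := Σ_{k=1}^{dN} (s_k^A − s_{k−1}^A)(s_k^B − s_{k−1}^B); in particular the maximal quantum value exceeds the maximal separable value by a factor of at least N / S^{AB}. -/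

import Mathlib

/-!
Only the effects matter: Bob's form a finite family of positive semidefinite matrices `B q`, here
the projections onto his basis vectors, and Alice's are the conjugates `A q` of these.

*Separable side.* For a state `ρ`, the numbers `α q = Tr (B q ρ)` are nonnegative and any `k` of
them have sum at most `s_k`, because `Tr (M ρ) ≤ ‖M‖`. Summation by parts against their decreasing
rearrangement turns this into `∑ (α q)² ≤ ∑ (s_k - s_{k-1})²`, although the increments of `s` need
not be monotone. Conjugation preserves the operator norm, so the same bound holds for Alice, and
Cauchy-Schwarz gives `sup Z_S ≤ S^{AB}`.

*Quantum side.* The maximally entangled vector is `d^{-1/2} vec 1`, and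
`⟨vec 1, (A ⊗ B) vec 1⟩ = Tr (B Aᵀ)`. Since `Aᵀ = B` for conjugate effects, it attains the value
`∑ Tr ((B q)²) / d`, which is `N` for `N` orthonormal bases.
-/

open scoped ComplexOrder

noncomputable section

/-- `|v⟩⟨v|`, the rank-one projection matrix associated with the vector `v`. -/
def rankOneProj {n : Type*} [Fintype n] (v : n → ℂ) : Matrix n n ℂ :=
  Matrix.vecMulVec v (star v)

/-- The operator (spectral) norm of a complex matrix. -/
def opNorm {n : Type*} [Fintype n] [DecidableEq n] (M : Matrix n n ℂ) : ℝ :=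
  ‖Matrix.toEuclideanCLM (𝕜 := ℂ) (n := n) M‖

/-- A density matrix: positive semidefinite with unit trace. -/
def IsDensityMatrix {n : Type*} [Fintype n] [DecidableEq n] (ρ : Matrix n n ℂ) : Prop :=
  ρ.PosSemidef ∧ ρ.trace = 1

/-- Orthonormality of a family of `d` vectors in `ℂ^d` (for each measurement setting). -/
def IsONBFamily {N d : ℕ} (φ : Fin N → Fin d → (Fin d → ℂ)) : Prop :=
  ∀ x a b, (∑ i, (starRingEnd ℂ) (φ x a i) * φ x b i) = if a = b then 1 else 0

/-- `s_k` : the maximal operator norm of a sum of `k` distinct projectors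
`|φ_x^a⟩⟨φ_x^a|` drawn from the measurement eigenvectors `φ`. -/
def sMax {N d : ℕ} (φ : Fin N → Fin d → (Fin d → ℂ)) (k : ℕ) : ℝ :=
  sSup { r : ℝ | ∃ T : Finset (Fin N × Fin d), T.card = k ∧
    r = opNorm (∑ q ∈ T, rankOneProj (φ q.1 q.2)) }

open Matrix Finset
open scoped Kronecker

section PartialSums

variable {ι R : Type*} [CommRing R] [LinearOrder R] [IsStrictOrderedRing R]

lemma sum_sq_le_sum_sq_sub_of_sum_le_card {α : ι → R} {s : ℕ → R} (hα : ∀ q, 0 ≤ α q)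
    (hs : s 0 = 0) (h : ∀ T : Finset ι, ∑ q ∈ T, α q ≤ s #T) (T : Finset ι) :
    ∑ q ∈ T, α q ^ 2 ≤ ∑ k ∈ Icc 1 #T, (s k - s (k - 1)) ^ 2 := by
  classical
  -- Removing the smallest element repeatedly, summation by parts and `2uα ≤ u² + α²` combine into
  -- one induction; the slack `s #T - ∑ α` is weighted by a lower bound `m` of the remaining values.
  suffices hslack : ∀ m, (∀ q ∈ T, m ≤ α q) →
      2 * m * (s #T - ∑ q ∈ T, α q) + ∑ q ∈ T, α q ^ 2 ≤
        ∑ k ∈ Icc 1 #T, (s k - s (k - 1)) ^ 2 by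
    simpa using hslack 0 fun q _ => hα q
  induction T using Finset.induction_on_min_value α with
  | empty => simp [hs]
  | insert a T ha hmin ih =>
    intro m hm
    have slack_nonneg : 0 ≤ s (#T + 1) - (α a + ∑ q ∈ T, α q) := by
      simpa [ha] using h (insert a T)
    have hma := mul_le_mul_of_nonneg_right (hm a (mem_insert_self a T)) slack_nonneg
    rw [card_insert_of_notMem ha, sum_insert ha, sum_insert ha, sum_Icc_succ_top (by simp),
      Nat.add_sub_cancel]
    linarith [ih (α a) hmin, sq_nonneg (s (#T + 1) - s #T - α a)]

end PartialSums

section Matrices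

variable {n : Type*} [Fintype n]

lemma posSemidef_rankOneProj (v : n → ℂ) : (rankOneProj v).PosSemidef :=
  posSemidef_vecMulVec_self_star v

lemma trace_mul_rankOneProj (M : Matrix n n ℂ) (v : n → ℂ) :
    (M * rankOneProj v).trace = star v ⬝ᵥ M *ᵥ v := by
  rw [rankOneProj, mul_vecMulVec, trace_vecMulVec, dotProduct_comm]

lemma rankOneProj_of_eq_conj {v w : n → ℂ} (h : ∀ i, w i = starRingEnd ℂ (v i)) :
    rankOneProj w = (rankOneProj v).map (starRingEnd ℂ) := by
  ext i j
  simp [rankOneProj, vecMulVec_apply, h]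

lemma trace_rankOneProj_mul_self (v : n → ℂ) :
    (rankOneProj v * rankOneProj v).trace = (star v ⬝ᵥ v) ^ 2 := by
  rw [trace_mul_rankOneProj, rankOneProj, vecMulVec_mulVec, dotProduct_smul]
  simp [sq]

open scoped MatrixOrder in
lemma re_trace_mul_nonneg {M ρ : Matrix n n ℂ} (hM : M.PosSemidef) (hρ : ρ.PosSemidef) :
    0 ≤ (M * ρ).trace.re := by
  classical
  obtain ⟨C, rfl⟩ := CStarAlgebra.nonneg_iff_eq_star_mul_self.mp hρ.nonneg
  rw [star_eq_conjTranspose, ← Matrix.mul_assoc, trace_mul_comm, ← Matrix.mul_assoc]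
  exact (Complex.nonneg_iff.mp (hM.mul_mul_conjTranspose_same C).trace_nonneg).1

variable [DecidableEq n]

open scoped MatrixOrder Matrix.Norms.L2Operator in
lemma re_trace_mul_le_opNorm {M ρ : Matrix n n ℂ} (hM : M.IsHermitian) (hρ : IsDensityMatrix ρ) :
    (M * ρ).trace.re ≤ opNorm M := by
  have hle : M ≤ algebraMap ℝ _ (opNorm M) := hM.isSelfAdjoint.le_algebraMap_norm_self
  have h := re_trace_mul_nonneg (le_iff.mp hle) hρ.1
  simpa [sub_mul, Algebra.algebraMap_eq_smul_one, hρ.2] using h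

lemma opNorm_conj_le (M : Matrix n n ℂ) : opNorm (M.map (starRingEnd ℂ)) ≤ opNorm M := by
  refine ContinuousLinearMap.opNorm_le_bound _ (norm_nonneg _) fun x => ?_
  let J := LinearIsometryEquiv.piLpCongrRight 2 fun _ : n => Complex.conjLIE
  have hJ : toEuclideanCLM (𝕜 := ℂ) (M.map (starRingEnd ℂ)) x =
      J (toEuclideanCLM (𝕜 := ℂ) M (J x)) := by
    ext i
    simp [J, mulVec, dotProduct, ofLp_toEuclideanCLM]
  rw [hJ, J.norm_map, ← J.norm_map x]
  exact ContinuousLinearMap.le_opNorm _ _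

lemma opNorm_conj (M : Matrix n n ℂ) : opNorm (M.map (starRingEnd ℂ)) = opNorm M := by
  refine (opNorm_conj_le M).antisymm ?_
  simpa [Function.comp_def] using opNorm_conj_le (M.map (starRingEnd ℂ))

variable (n) in
/-- The maximally entangled state on `ℂⁿ ⊗ ℂⁿ`, the normalized projection onto `∑ i, eᵢ ⊗ eᵢ`,
which is the vectorization of the identity matrix. -/
def maxEntangled : Matrix (n × n) (n × n) ℂ :=
  (Fintype.card n : ℂ)⁻¹ • rankOneProj (vec 1)

lemma isDensityMatrix_maxEntangled [Nonempty n] : IsDensityMatrix (maxEntangled n) := by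
  refine ⟨(posSemidef_rankOneProj _).smul (by positivity), ?_⟩
  simp [maxEntangled, rankOneProj, trace_vecMulVec, vec_dotProduct_vec, star_vec]

lemma trace_kronecker_mul_maxEntangled (A B : Matrix n n ℂ) :
    (A ⊗ₖ B * maxEntangled n).trace = (B * Aᵀ).trace / Fintype.card n := by
  rw [maxEntangled, Matrix.mul_smul, trace_smul, trace_mul_rankOneProj, kronecker_mulVec_vec,
    star_vec_dotProduct_vec]
  simp [div_eq_inv_mul]

end Matrices

section Effects

variable {ι n : Type*} [Fintype n] [DecidableEq n]

/-- The number `s_k` of a family of effects: the largest operator norm of a sum of `k` of them. -/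
def maxSubsumNorm (E : ι → Matrix n n ℂ) (k : ℕ) : ℝ :=
  sSup {r : ℝ | ∃ T : Finset ι, #T = k ∧ r = opNorm (∑ q ∈ T, E q)}

@[simp]
lemma maxSubsumNorm_zero (E : ι → Matrix n n ℂ) : maxSubsumNorm E 0 = 0 := by
  simp [maxSubsumNorm, opNorm]

lemma maxSubsumNorm_conj (E : ι → Matrix n n ℂ) :
    maxSubsumNorm (fun q => (E q).map (starRingEnd ℂ)) = maxSubsumNorm E := by
  funext k
  have hsum : ∀ T : Finset ι, ∑ q ∈ T, (E q).map (starRingEnd ℂ) =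
      (∑ q ∈ T, E q).map (starRingEnd ℂ) := fun T =>
    (map_sum (starRingEnd ℂ).mapMatrix E T).symm
  simp only [maxSubsumNorm, hsum, opNorm_conj]

lemma opNorm_sum_le_maxSubsumNorm [Finite ι] (E : ι → Matrix n n ℂ) (T : Finset ι) :
    opNorm (∑ q ∈ T, E q) ≤ maxSubsumNorm E #T := by
  refine le_csSup (((Set.finite_range fun T => opNorm (∑ q ∈ T, E q)).subset ?_).bddAbove)
    ⟨T, rfl, rfl⟩
  rintro _ ⟨T, -, rfl⟩
  exact ⟨T, rfl⟩

variable [Fintype ι]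

/-- The quantity `S^{AB}` of two families of effects, which bounds the separable values when these
are conjugate to each other. -/
def separableBound (A B : ι → Matrix n n ℂ) : ℝ :=
  ∑ k ∈ Icc 1 (Fintype.card ι), (maxSubsumNorm A k - maxSubsumNorm A (k - 1)) *
    (maxSubsumNorm B k - maxSubsumNorm B (k - 1))

/-- The set `Z_Q` of values of `∑ q, A q ⊗ B q` in bipartite states. -/
def quantumValues (A B : ι → Matrix n n ℂ) : Set ℝ :=
  {r : ℝ | ∃ ρ : Matrix (n × n) (n × n) ℂ, IsDensityMatrix ρ ∧
    r = ∑ q, (A q ⊗ₖ B q * ρ).trace.re}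

/-- The set `Z_S` of values of `∑ q, A q ⊗ B q` in separable models, with hidden variable `Λ`. -/
def separableValues (A B : ι → Matrix n n ℂ) : Set ℝ :=
  {r : ℝ | ∃ (Λ : Type) (_ : Fintype Λ) (p : Λ → ℝ) (ρA ρB : Λ → Matrix n n ℂ),
    (∀ l, 0 ≤ p l) ∧ (∑ l, p l = 1) ∧
    (∀ l, IsDensityMatrix (ρA l)) ∧ (∀ l, IsDensityMatrix (ρB l)) ∧
    r = ∑ q, ∑ l, p l * (A q * ρA l).trace.re * (B q * ρB l).trace.re}

lemma sum_sq_re_trace_mul_le {E : ι → Matrix n n ℂ} (hE : ∀ q, (E q).PosSemidef)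
    {ρ : Matrix n n ℂ} (hρ : IsDensityMatrix ρ) :
    ∑ q, (E q * ρ).trace.re ^ 2 ≤ separableBound E E := by
  have hsub : ∀ T : Finset ι, ∑ q ∈ T, (E q * ρ).trace.re ≤ maxSubsumNorm E #T := fun T =>
    calc ∑ q ∈ T, (E q * ρ).trace.re = ((∑ q ∈ T, E q) * ρ).trace.re := by
          rw [Finset.sum_mul, trace_sum, Complex.re_sum]
      _ ≤ opNorm (∑ q ∈ T, E q) :=
          re_trace_mul_le_opNorm (posSemidef_sum T fun q _ => hE q).isHermitian hρ
      _ ≤ maxSubsumNorm E #T := opNorm_sum_le_maxSubsumNorm E T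
  simpa only [separableBound, ← sq, card_univ] using sum_sq_le_sum_sq_sub_of_sum_le_card
    (fun q => re_trace_mul_nonneg (hE q) hρ.1) (maxSubsumNorm_zero E) hsub univ

lemma sum_re_trace_mul_mul_re_trace_mul_le {A B : ι → Matrix n n ℂ}
    (hA : ∀ q, (A q).PosSemidef) (hB : ∀ q, (B q).PosSemidef) {ρ σ : Matrix n n ℂ}
    (hρ : IsDensityMatrix ρ) (hσ : IsDensityMatrix σ) :
    ∑ q, (A q * ρ).trace.re * (B q * σ).trace.re ≤
      √(separableBound A A) * √(separableBound B B) := by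
  refine (Real.sum_mul_le_sqrt_mul_sqrt _ _ _).trans ?_
  gcongr
  exacts [sum_sq_re_trace_mul_le hA hρ, sum_sq_re_trace_mul_le hB hσ]

lemma sSup_separableValues_le {A B : ι → Matrix n n ℂ}
    (hA : ∀ q, (A q).PosSemidef) (hB : ∀ q, (B q).PosSemidef) :
    sSup (separableValues A B) ≤ √(separableBound A A) * √(separableBound B B) := by
  refine Real.sSup_le ?_ (by positivity)
  rintro _ ⟨Λ, _, p, ρA, ρB, hp, hp_sum, hρA, hρB, rfl⟩
  calc ∑ q, ∑ l, p l * (A q * ρA l).trace.re * (B q * ρB l).trace.re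
      = ∑ l, p l * ∑ q, (A q * ρA l).trace.re * (B q * ρB l).trace.re := by
        rw [Finset.sum_comm]
        simp only [Finset.mul_sum, mul_assoc]
    _ ≤ ∑ l, p l * (√(separableBound A A) * √(separableBound B B)) := by
        gcongr with l
        · exact hp l
        · exact sum_re_trace_mul_mul_re_trace_mul_le hA hB (hρA l) (hρB l)
    _ = √(separableBound A A) * √(separableBound B B) := by rw [← Finset.sum_mul, hp_sum, one_mul]

lemma bddAbove_quantumValues {A B : ι → Matrix n n ℂ}
    (hA : ∀ q, (A q).PosSemidef) (hB : ∀ q, (B q).PosSemidef) :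
    BddAbove (quantumValues A B) := by
  refine ⟨∑ q, opNorm (A q ⊗ₖ B q), ?_⟩
  rintro _ ⟨ρ, hρ, rfl⟩
  exact sum_le_sum fun q _ => re_trace_mul_le_opNorm ((hA q).kronecker (hB q)).isHermitian hρ

lemma sum_re_trace_mul_transpose_div_card_le_sSup_quantumValues [Nonempty n]
    {A B : ι → Matrix n n ℂ} (hA : ∀ q, (A q).PosSemidef) (hB : ∀ q, (B q).PosSemidef) :
    (∑ q, (B q * (A q)ᵀ).trace.re) / Fintype.card n ≤ sSup (quantumValues A B) := by
  refine le_csSup (bddAbove_quantumValues hA hB) ⟨maxEntangled n, isDensityMatrix_maxEntangled, ?_⟩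
  simp only [trace_kronecker_mul_maxEntangled, Complex.div_natCast_re, Finset.sum_div]

theorem entanglement_violation_general [Nonempty n] {A B : ι → Matrix n n ℂ}
    (hB : ∀ q, (B q).PosSemidef) (hAB : ∀ q, A q = (B q).map (starRingEnd ℂ)) :
    (∑ q, (B q * B q).trace.re) / Fintype.card n / separableBound A B *
      sSup (separableValues A B) ≤ sSup (quantumValues A B) := by
  have hAt : ∀ q, (A q)ᵀ = B q := fun q => by rw [hAB]; exact (hB q).isHermitian
  have hA : ∀ q, (A q).PosSemidef := fun q => by simpa [← hAt q] using (hB q).transpose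
  have hs : maxSubsumNorm A = maxSubsumNorm B := by rw [funext hAB, maxSubsumNorm_conj]
  have hbound_nonneg : 0 ≤ separableBound A B := by
    simpa only [separableBound, hs] using sum_nonneg fun k _ => mul_self_nonneg _
  have hS : sSup (separableValues A B) ≤ separableBound A B := by
    have h := sSup_separableValues_le hA hB
    simp only [separableBound, hs] at h hbound_nonneg ⊢
    rwa [Real.mul_self_sqrt hbound_nonneg] at h
  have hQ := sum_re_trace_mul_transpose_div_card_le_sSup_quantumValues hA hB
  simp only [hAt] at hQ
  refine le_trans ?_ hQ
  rw [div_mul_eq_mul_div, mul_div_assoc]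
  refine mul_le_of_le_one_right (div_nonneg (sum_nonneg fun q _ => ?_) (Nat.cast_nonneg _))
    (div_le_one_of_le₀ hS hbound_nonneg)
  exact re_trace_mul_nonneg (hB q) (hB q)

end Effects

lemma sMax_eq_maxSubsumNorm {N d : ℕ} (φ : Fin N → Fin d → (Fin d → ℂ)) :
    sMax φ = maxSubsumNorm fun q : Fin N × Fin d => rankOneProj (φ q.1 q.2) :=
  rfl

lemma IsONBFamily.trace_rankOneProj_mul_self {N d : ℕ} {φ : Fin N → Fin d → (Fin d → ℂ)}
    (hφ : IsONBFamily φ) (x : Fin N) (a : Fin d) :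
    (rankOneProj (φ x a) * rankOneProj (φ x a)).trace = 1 := by
  have hunit : star (φ x a) ⬝ᵥ φ x a = 1 := (hφ x a a).trans (if_pos rfl)
  rw [_root_.trace_rankOneProj_mul_self, hunit, one_pow]

/-- **Corollary (violation of the entanglement inequality).**
With Alice's bases the entrywise conjugates of Bob's, the maximal quantum value exceeds
the maximal separable value by a factor of at least `N / S^{AB}`. -/
theorem entanglement_violation
    (N d : ℕ) (hN : 1 ≤ N) (hd : 1 ≤ d)
    (φ : Fin N → Fin d → (Fin d → ℂ)) (hφ : IsONBFamily φ)
    (ψ : Fin N → Fin d → (Fin d → ℂ))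
    (hψ : ∀ x a i, ψ x a i = (starRingEnd ℂ) (φ x a i))
    (SAB : ℝ)
    (hSAB : SAB = ∑ k ∈ Finset.Icc 1 (d * N),
      (sMax ψ k - sMax ψ (k - 1)) * (sMax φ k - sMax φ (k - 1)))
    (ZQ ZS : Set ℝ)
    (hZQ : ZQ = { r : ℝ |
      ∃ ρ : Matrix (Fin d × Fin d) (Fin d × Fin d) ℂ, IsDensityMatrix ρ ∧
        r = ∑ x, ∑ a, (Matrix.trace
          (Matrix.kroneckerMap (· * ·) (rankOneProj (ψ x a)) (rankOneProj (φ x a)) * ρ)).re })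
    (hZS : ZS = { r : ℝ | ∃ (Λ : Type) (_ : Fintype Λ) (p : Λ → ℝ)
        (ρA ρB : Λ → Matrix (Fin d) (Fin d) ℂ),
      (∀ l, 0 ≤ p l) ∧ (∑ l, p l = 1) ∧
      (∀ l, IsDensityMatrix (ρA l)) ∧ (∀ l, IsDensityMatrix (ρB l)) ∧
      r = ∑ x, ∑ a, ∑ l, p l *
        (Matrix.trace (rankOneProj (ψ x a) * ρA l)).re *
        (Matrix.trace (rankOneProj (φ x a) * ρB l)).re }) :
    ((N : ℝ) / SAB) * sSup ZS ≤ sSup ZQ := by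
  subst hSAB hZQ hZS
  have : NeZero d := ⟨by omega⟩
  simpa [sMax_eq_maxSubsumNorm, separableBound, quantumValues, separableValues,
    Fintype.sum_prod_type, hφ.trace_rankOneProj_mul_self, mul_comm N d,
    NeZero.ne d] using
    entanglement_violation_general (fun q : Fin N × Fin d => posSemidef_rankOneProj (φ q.1 q.2))
      fun q => rankOneProj_of_eq_conj (hψ q.1 q.2)
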